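/- arXiv:1709.05728 — 4 statements merged into one kernel-verified Lean document; each statement's English description precedes it below -/
import Mathlib

section
/- Let B be an associative ring, let d ∈ B, and let Z ⊆ B. Suppose that [d, z_1, z_2] = 0 and [d, z_1 z_2, z_3] = 0 for all z_1, z_2, z_3 ∈ Z. Then for all z_1, z_2, z_3 ∈ Z, [d, z_1][z_2, z_3] + [d, z_2][z_1, z_3] = 0. -/
/-- The commutator `[a, b] = a * b - b * a`. -/
def cm {B : Type*} [Ring B] (a b : B) : B := a * b - b * a

theorem stmt_7 {B : Type*} [Ring B] (d : B) (Z : Set B)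
    (h1 : ∀ z₁ ∈ Z, ∀ z₂ ∈ Z, cm (cm d z₁) z₂ = 0)
    (h2 : ∀ z₁ ∈ Z, ∀ z₂ ∈ Z, ∀ z₃ ∈ Z, cm (cm d (z₁ * z₂)) z₃ = 0) :
    ∀ z₁ ∈ Z, ∀ z₂ ∈ Z, ∀ z₃ ∈ Z,
      cm d z₁ * cm z₂ z₃ + cm d z₂ * cm z₁ z₃ = 0 := by
  intro x hx y hy z hz
  -- By Leibniz, `[d, xy, z] = [x[d, y] + [d, x]y, z]`. As `[d, x]` and `[d, y]` commute with
  -- `x`, `y`, `z`, this equals the left-hand side; the correction terms below record the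
  -- commutations used.
  have key : cm d x * cm y z + cm d y * cm x z =
      cm (cm d (x * y)) z + cm (cm d y) x * z - cm (cm d y) z * x
        - z * cm (cm d y) x - cm (cm d x) z * y := by
    unfold cm
    noncomm_ring
  rw [key, h2 x hx y hy z hz, h1 y hy x hx, h1 y hy z hz, h1 x hx z hz]
  simp
end

section
/- Let B be an associative ring, let c ∈ B, and let Z ⊆ B. Suppose that [c, z_1, z_2, z_3] = 0, [c, z_1, z_2 z_3, z_4] = 0, and [c, z_1 z_2, z_3, z_4] = 0 for all z_1, z_2, z_3, z_4 ∈ Z. Then for all z_1, z_2, z_3, z_4 ∈ Z, [c, z_1][z_2, z_3, z_4] + [c, z_2][z_1, z_3, z_4] = 0. -/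
lemma cm_mul_right {B : Type*} [Ring B] (x y z : B) :
    cm x (y * z) = y * cm x z + cm x y * z := by
  unfold cm; noncomm_ring

lemma mul_cm_left {B : Type*} [Ring B] (x y z : B) :
    cm (x * y) z = x * cm y z + cm x z * y := by
  unfold cm; noncomm_ring

lemma add_cm_left {B : Type*} [Ring B] (x y z : B) :
    cm (x + y) z = cm x z + cm y z := by
  unfold cm; noncomm_ring

lemma cm_swap {B : Type*} [Ring B] (x y : B) : cm x y = -cm y x := by
  unfold cm; noncomm_ring

lemma cm_jacobi {B : Type*} [Ring B] (x y z : B) :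
    cm x (cm y z) = cm (cm x y) z - cm (cm x z) y := by
  unfold cm; noncomm_ring

lemma mul_comm_of_cm_eq_zero {B : Type*} [Ring B] {x y : B} (h : cm x y = 0) :
    x * y = y * x := sub_eq_zero.mp h

/-- An element commuting with `y` and `z` commutes with `[y, z]`. -/
lemma cm_cm_eq_zero {B : Type*} [Ring B] {x y z : B} (hy : cm x y = 0) (hz : cm x z = 0) :
    cm x (cm y z) = 0 := by
  rw [cm_jacobi, hy, hz]; simp [cm]

/-- If `[x, y]`, `[x, z]` and `[x, y z]` commute with `w`, and `[x, z]` also commutes with `y`,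
then `[x, y][z, w]` changes sign when `y` and `z` are swapped. It is applied with `x = [c, a]`. -/
lemma cm_mul_antisymm {B : Type*} [Ring B] {x y z w : B}
    (hyw : cm (cm x y) w = 0) (hzy : cm (cm x z) y = 0) (hzw : cm (cm x z) w = 0)
    (h : cm (cm x (y * z)) w = 0) :
    cm x y * cm z w + cm x z * cm y w = 0 := by
  rw [cm_mul_right, add_cm_left, mul_cm_left, mul_cm_left, hyw, hzw,
    ← mul_comm_of_cm_eq_zero (cm_cm_eq_zero hzy hzw)] at h
  simpa [add_comm] using h

theorem stmt_8 {B : Type*} [Ring B] (c : B) (Z : Set B)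
    (h1 : ∀ z₁ ∈ Z, ∀ z₂ ∈ Z, ∀ z₃ ∈ Z, cm (cm (cm c z₁) z₂) z₃ = 0)
    (h2 : ∀ z₁ ∈ Z, ∀ z₂ ∈ Z, ∀ z₃ ∈ Z, ∀ z₄ ∈ Z,
      cm (cm (cm c z₁) (z₂ * z₃)) z₄ = 0)
    (h3 : ∀ z₁ ∈ Z, ∀ z₂ ∈ Z, ∀ z₃ ∈ Z, ∀ z₄ ∈ Z,
      cm (cm (cm c (z₁ * z₂)) z₃) z₄ = 0) :
    ∀ z₁ ∈ Z, ∀ z₂ ∈ Z, ∀ z₃ ∈ Z, ∀ z₄ ∈ Z,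
      cm c z₁ * cm (cm z₂ z₃) z₄ + cm c z₂ * cm (cm z₁ z₃) z₄ = 0 := by
  intro a ha b hb z hz w hw
  have anti : ∀ p ∈ Z, ∀ q ∈ Z, ∀ r ∈ Z, ∀ s ∈ Z,
      cm (cm c p) q * cm r s = -(cm (cm c p) r * cm q s) := fun p hp q hq r hr s hs =>
    eq_neg_of_add_eq_zero_left (cm_mul_antisymm (h1 p hp q hq s hs) (h1 p hp r hr q hq)
      (h1 p hp r hr s hs) (h2 p hp q hq r hr s hs))
  have comm : ∀ p ∈ Z, ∀ q ∈ Z, ∀ r ∈ Z, ∀ s ∈ Z,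
      cm r s * cm (cm c p) q = cm (cm c p) q * cm r s := fun p hp q hq r hr s hs =>
    (mul_comm_of_cm_eq_zero (cm_cm_eq_zero (h1 p hp q hq r hr) (h1 p hp q hq s hs))).symm
  have hxb : cm c b * cm (cm a z) w = cm (cm a z) w * cm c b := by
    apply mul_comm_of_cm_eq_zero
    have e : cm (cm c b) (cm a z) = 0 := by
      rw [cm_jacobi, h1 b hb a ha z hz, h1 b hb z hz a ha, sub_zero]
    have e' : cm (cm (cm c b) w) (cm a z) = 0 :=
      cm_cm_eq_zero (h1 b hb w hw a ha) (h1 b hb w hw z hz)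
    rw [cm_jacobi, e, e']; simp [cm]
  have h := h3 a ha b hb z hz w hw
  simp only [cm_mul_right, add_cm_left, mul_cm_left] at h
  -- The relation `anti` turns the four products `C(·, ·)[·, ·]` into
  -- multiples of `C(b, a)[z, w]` and `C(a, b)[z, w]`, which cancel in pairs.
  rw [h1 b hb z hz w hw, h1 a ha z hz w hw, comm b hb z hz a ha w hw, comm b hb w hw a ha z hz,
    anti b hb z hz a ha w hw, anti b hb w hw a ha z hz, anti a ha z hz b hb w hw,
    anti a ha w hw b hb z hz, cm_swap w z] at h
  rw [hxb, ← h]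
  noncomm_ring
end

section
/- Let B be an associative ring, let c ∈ B, and let Z ⊆ B. Suppose that [c, z_1][z_2, z_3, z_4] + [c, z_2][z_1, z_3, z_4] = 0 for all z_1, z_2, z_3, z_4 ∈ Z. Then for all z_1, z_2, z_3, z_4 ∈ Z and every permutation σ of {1, 2, 3, 4}, one has [c, z_{σ(1)}][z_{σ(2)}, z_{σ(3)}, z_{σ(4)}] = sgn(σ)·[c, z_1][z_2, z_3, z_4]. -/
/-- The product `[c, x][y, z, w]`. -/
def quad {B : Type*} [Ring B] (c x y z w : B) : B := cm c x * cm (cm y z) w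

theorem quad_swap_mid {B : Type*} [Ring B] (c x y z w : B) :
    quad c x z y w = -quad c x y z w := by
  simp only [quad, cm]; noncomm_ring

theorem quad_jacobi {B : Type*} [Ring B] (c x y z w : B) :
    quad c x y z w + quad c x z w y + quad c x w y z = 0 := by
  simp only [quad, cm]; noncomm_ring

/-- Antisymmetry in the last two arguments follows from antisymmetry in the first two. -/
theorem quad_swap_last {B : Type*} [Ring B] (c : B) (Z : Set B)
    (h : ∀ x ∈ Z, ∀ y ∈ Z, ∀ z ∈ Z, ∀ w ∈ Z, quad c y x z w = -quad c x y z w)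
    {x y z w : B} (hx : x ∈ Z) (hy : y ∈ Z) (hz : z ∈ Z) (hw : w ∈ Z) :
    quad c x y w z = -quad c x y z w := by
  have j₁ := quad_jacobi c z x y w
  have j₂ := quad_jacobi c w x y z
  have e₁ : quad c z x y w = quad c x y z w := by
    rw [h x hx z hz y hy w hw, quad_swap_mid c x y z w, neg_neg]
  have e₂ : quad c w x y z = quad c x y w z := by
    rw [h x hx w hw y hy z hz, quad_swap_mid c x y w z, neg_neg]
  have e₃ : quad c w y z x = -quad c z y w x := by
    rw [h y hy w hw z hz x hx, quad_swap_mid c y z w x, h z hz y hy w hw x hx, neg_neg]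
  rw [e₁] at j₁
  rw [e₂, e₃, h z hz w hw x hx y hy] at j₂
  linear_combination (norm := abel) j₁ + j₂

theorem stmt_9 {B : Type*} [Ring B] (c : B) (Z : Set B)
    (h : ∀ z₁ ∈ Z, ∀ z₂ ∈ Z, ∀ z₃ ∈ Z, ∀ z₄ ∈ Z,
      cm c z₁ * cm (cm z₂ z₃) z₄ + cm c z₂ * cm (cm z₁ z₃) z₄ = 0) :
    ∀ z : Fin 4 → B, (∀ i, z i ∈ Z) → ∀ σ : Equiv.Perm (Fin 4),
      cm c (z (σ 0)) * cm (cm (z (σ 1)) (z (σ 2))) (z (σ 3)) =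
        (Equiv.Perm.sign σ : ℤ) • (cm c (z 0) * cm (cm (z 1) (z 2)) (z 3)) := by
  have h' : ∀ x ∈ Z, ∀ y ∈ Z, ∀ z ∈ Z, ∀ w ∈ Z, quad c y x z w = -quad c x y z w :=
    fun x hx y hy z hz w hw => eq_neg_of_add_eq_zero_left (h y hy x hx z hz w hw)
  intro z hz σ
  change quad c (z (σ 0)) (z (σ 1)) (z (σ 2)) (z (σ 3)) =
    (Equiv.Perm.sign σ : ℤ) • quad c (z 0) (z 1) (z 2) (z 3)
  have hσ : σ ∈ Submonoid.closure
      (Set.range fun i : Fin 3 => Equiv.swap i.castSucc i.succ) := by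
    rw [Equiv.Perm.mclosure_swap_castSucc_succ]; trivial
  induction hσ using Submonoid.closure_induction generalizing z with
  | mem τ hτ =>
    obtain ⟨i, rfl⟩ := hτ
    have hs : Equiv.Perm.sign (Equiv.swap i.castSucc i.succ) = -1 :=
      Equiv.Perm.sign_swap i.castSucc_lt_succ.ne
    simp only [hs]
    fin_cases i
    · simpa [Equiv.swap_apply_def] using h' _ (hz 0) _ (hz 1) _ (hz 2) _ (hz 3)
    · simpa [Equiv.swap_apply_def] using quad_swap_mid c (z 0) (z 1) (z 2) (z 3)
    · simpa [Equiv.swap_apply_def] using quad_swap_last c Z h' (hz 0) (hz 1) (hz 2) (hz 3)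
  | one => simp
  | mul σ τ _ _ ihσ ihτ =>
    -- `z ∘ (σ * τ) = (z ∘ σ) ∘ τ`, so the claim for `τ` is applied to the tuple `z ∘ σ`.
    have := ihτ (fun i => z (σ i)) (fun i => hz _)
    simp only [Equiv.Perm.mul_apply, this, ihσ z hz, Equiv.Perm.sign_mul, Units.val_mul,
      smul_smul, mul_comm]
end

section
/- Let B be an associative ring, let c ∈ B, and let Z ⊆ B. Suppose that [c, z_1][z_2, z_3, z_4] + [c, z_2][z_1, z_3, z_4] = 0 for all z_1, z_2, z_3, z_4 ∈ Z. Then for all z_1, z_2, z_3, z_4 ∈ Z, 3·[c, z_1][z_2, z_3, z_4] = 0. -/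
/-- A function of four variables that is skew-symmetric under exchanging its first two arguments
and its middle two, and satisfies the Jacobi identity in its last three, is killed by `3`. -/
theorem three_nsmul_eq_zero {α A : Type*} [AddCommGroup A] (Z : Set α) (f : α → α → α → α → A)
    (h12 : ∀ a ∈ Z, ∀ b ∈ Z, ∀ u ∈ Z, ∀ v ∈ Z, f a b u v = -f b a u v)
    (h23 : ∀ a b u v, f a b u v = -f a u b v)
    (jac : ∀ a b u v, f a b u v + f a u v b + f a v b u = 0)
    {a b u v : α} (ha : a ∈ Z) (hb : b ∈ Z) (hu : u ∈ Z) (hv : v ∈ Z) :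
    3 • f a b u v = 0 := by
  have cyc : ∀ x ∈ Z, ∀ y ∈ Z, ∀ z ∈ Z, ∀ w ∈ Z, f x y z w = f y z x w := by
    intro x hx y hy z hz w hw
    rw [h12 x hx y hy z hz w hw, h23 y x z w, neg_neg]
  have e1 : f a b u v + f a u v b - f a b v u = 0 := by
    have := jac a b u v
    rwa [h23 a v b u, ← sub_eq_add_neg] at this
  have e2 : -f a b u v + f b u v a + f a b v u = 0 := by
    have := jac b a u v
    rwa [h12 b hb a ha u hu v hv, ← cyc a ha b hb v hv u hu] at this
  have e3 : f a b u v - f b u v a + f a u v b = 0 := by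
    have := jac u a b v
    rwa [cyc u hu a ha b hb v hv, h12 u hu b hb v hv a ha, ← sub_eq_add_neg,
      ← cyc a ha u hu v hv b hb] at this
  have e4 : f a b v u + f b u v a - f a u v b = 0 := by
    have := jac v a b u
    rwa [cyc v hv a ha b hb u hu, cyc v hv b hb u hu a ha, h23 v u a b,
      cyc v hv a ha u hu b hb, ← sub_eq_add_neg] at this
  calc 3 • f a b u v
      = (f a b u v + f a u v b - f a b v u) - (-f a b u v + f b u v a + f a b v u)
        + (f a b u v - f b u v a + f a u v b)
        + 2 • (f a b v u + f b u v a - f a u v b) := by abel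
    _ = 0 := by rw [e1, e2, e3, e4]; simp

theorem stmt_10 {B : Type*} [Ring B] (c : B) (Z : Set B)
    (h : ∀ z₁ ∈ Z, ∀ z₂ ∈ Z, ∀ z₃ ∈ Z, ∀ z₄ ∈ Z,
      cm c z₁ * cm (cm z₂ z₃) z₄ + cm c z₂ * cm (cm z₁ z₃) z₄ = 0) :
    ∀ z₁ ∈ Z, ∀ z₂ ∈ Z, ∀ z₃ ∈ Z, ∀ z₄ ∈ Z,
      3 • (cm c z₁ * cm (cm z₂ z₃) z₄) = 0 := by
  intro z₁ h₁ z₂ h₂ z₃ h₃ z₄ h₄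
  refine three_nsmul_eq_zero Z (fun a b u v => cm c a * cm (cm b u) v) ?_ ?_ ?_ h₁ h₂ h₃ h₄
  · intro a ha b hb u hu v hv
    exact eq_neg_of_add_eq_zero_left (h a ha b hb u hu v hv)
  · intro a b u v
    simp only [cm]
    noncomm_ring
  · intro a b u v
    simp only [cm]
    noncomm_ring
end
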